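/- For every j ∈ {1, 2, 3, 4} and every monomial α such that c_{jn} s_n + α ∈ ⟨P⟩, if the variable f_n divides α then α = b_{jn}^{2^(2^n)} c_{jn} f_n. -/

import Mathlib

open MvPolynomial

/-- Monomials in the variables `σ`, represented by their exponent vectors. -/
abbrev Mon (σ : Type*) := σ →₀ ℕ

/-- A monomial order: a total order on monomials such that `1 ≼ t` for every monomial `t`
and `t ≼ u → t·v ≼ u·v` (written additively on exponent vectors). -/
structure MonOrd (σ : Type*) where
  le : Mon σ → Mon σ → Prop
  le_refl : ∀ t, le t t
  le_trans : ∀ t u v, le t u → le u v → le t v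
  le_antisymm : ∀ t u, le t u → le u t → t = u
  le_total : ∀ t u, le t u ∨ le u t
  zero_le : ∀ t, le 0 t
  add_le_add : ∀ t u v, le t u → le (t + v) (u + v)

/-- Strict version of a monomial order. -/
def MonOrd.lt {σ : Type*} (μ : MonOrd σ) (t u : Mon σ) : Prop := μ.le t u ∧ t ≠ u

/-- The extension of a monomial order (given by the relation `r` on monomials) to polynomials:
`g ≼ f` iff `g = f` or the greatest monomial on which `f` and `g` differ occurs in `f`.
(This is the closed form of the recursive definition: `g ≼ f` iff `g = f`, or
`HT g ≺ HT f`, or `HT g = HT f` and `g - HT g ≼ f - HT f`, with `0` the least polynomial.) -/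
def polyLe {σ : Type*} (r : Mon σ → Mon σ → Prop) (g f : MvPolynomial σ (ZMod 2)) : Prop :=
  g = f ∨ ∃ t, t ∈ f.support ∧ t ∉ g.support ∧
    ∀ u : Mon σ, ((u ∈ f.support ∧ u ∉ g.support) ∨ (u ∈ g.support ∧ u ∉ f.support)) → r u t

/-- Strict extension of a monomial order to polynomials. -/
def polyLt {σ : Type*} (r : Mon σ → Mon σ → Prop) (g f : MvPolynomial σ (ZMod 2)) : Prop :=
  polyLe r g f ∧ g ≠ f

/-- `S_F`: the set of non-residual polynomials with respect to `F` and the monomial order `r`,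
i.e. those `f` admitting a `g` with `f + g ∈ ⟨F⟩` and `g ≺ f`. -/
def SF {σ : Type*} (r : Mon σ → Mon σ → Prop) (F : Set (MvPolynomial σ (ZMod 2))) :
    Set (MvPolynomial σ (ZMod 2)) :=
  {f | ∃ g, f + g ∈ Ideal.span F ∧ polyLt r g f}

/-- `t` is the head monomial (`r`-greatest monomial) of the polynomial `f`. -/
def IsHT {σ : Type*} (r : Mon σ → Mon σ → Prop) (f : MvPolynomial σ (ZMod 2)) (t : Mon σ) :
    Prop :=
  t ∈ f.support ∧ ∀ u ∈ f.support, r u t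

/-- `HT(S)`: the set of head monomials (as polynomials) of the nonzero elements of `S`. -/
def HTset {σ : Type*} (r : Mon σ → Mon σ → Prop) (S : Set (MvPolynomial σ (ZMod 2))) :
    Set (MvPolynomial σ (ZMod 2)) :=
  {p | ∃ f ∈ S, f ≠ 0 ∧ ∃ t, IsHT r f t ∧ p = monomial t 1}

/-- The divisibility (componentwise) order `◁` on monomials. -/
def triMon {σ : Type*} (t u : Mon σ) : Prop := ∀ x, t x ≤ u x

/-- The order `◁` on polynomials: `p ◁ q` iff there is an injective map `φ` from the
monomials of `p` to the monomials of `q` with `t ◁ φ t` for each monomial `t` of `p`. -/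
def triPoly {σ : Type*} (p q : MvPolynomial σ (ZMod 2)) : Prop :=
  ∃ φ : Mon σ → Mon σ, Set.InjOn φ ↑p.support ∧ ∀ t ∈ p.support, φ t ∈ q.support ∧ triMon t (φ t)

/-- Upward closure with respect to `◁`. -/
def upClo {σ : Type*} (A : Set (MvPolynomial σ (ZMod 2))) : Set (MvPolynomial σ (ZMod 2)) :=
  {q | ∃ p ∈ A, triPoly p q}

/-- `Min_◁(A)`: the `◁`-minimal elements of `A`. -/
def minTri {σ : Type*} (A : Set (MvPolynomial σ (ZMod 2))) : Set (MvPolynomial σ (ZMod 2)) :=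
  {p | p ∈ A ∧ ∀ q ∈ A, triPoly q p → q = p}

/-- `G` is a Gröbner basis of the ideal `I` with respect to the monomial order `r`. -/
def IsGB {σ : Type*} (r : Mon σ → Mon σ → Prop) (G : Finset (MvPolynomial σ (ZMod 2)))
    (I : Ideal (MvPolynomial σ (ZMod 2))) : Prop :=
  (↑G : Set (MvPolynomial σ (ZMod 2))) ⊆ ↑I ∧
    Ideal.span (↑G : Set (MvPolynomial σ (ZMod 2))) = I ∧
    Ideal.span (HTset r (↑I : Set (MvPolynomial σ (ZMod 2)))) = Ideal.span (HTset r ↑G)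

/-- `G` is a reduced Gröbner basis of `I` with respect to `r`. -/
def IsReducedGB {σ : Type*} (r : Mon σ → Mon σ → Prop) (G : Finset (MvPolynomial σ (ZMod 2)))
    (I : Ideal (MvPolynomial σ (ZMod 2))) : Prop :=
  IsGB r G I ∧ ∀ f ∈ G, ¬ ∀ t ∈ f.support,
    (monomial t 1 : MvPolynomial σ (ZMod 2)) ∈
      Ideal.span (HTset r ((↑G : Set (MvPolynomial σ (ZMod 2))) \ {f}))

/-- The variable set `X`: the special variables `s, ℓ, c, c̄, b, b̄` together with, for each
`0 ≤ i ≤ n`, the variables `s_i, f_i, q_{ji}, c_{ji}, b_{ji}` (`1 ≤ j ≤ 4`, encoded by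
`j : Fin 4`) and their barred copies (`bar = true`). -/
inductive MVar (n : ℕ) : Type where
  | vs | vl | vc | vcb | vb | vbb
  | vS (bar : Bool) (i : Fin (n+1))
  | vF (bar : Bool) (i : Fin (n+1))
  | vQ (bar : Bool) (j : Fin 4) (i : Fin (n+1))
  | vC (bar : Bool) (j : Fin 4) (i : Fin (n+1))
  | vB (bar : Bool) (j : Fin 4) (i : Fin (n+1))
deriving DecidableEq

open MVar

abbrev MPoly (n : ℕ) := MvPolynomial (MVar n) (ZMod 2)

/-- `e(n) = 2^(2^n)`. -/
def en (n : ℕ) : ℕ := 2 ^ 2 ^ n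

/-- The set `P_0` (barred copy if `bar = true`). -/
def P0 (n : ℕ) (bar : Bool) : Set (MPoly n) :=
  {p | ∃ j : Fin 4, p =
    X (vB bar j 0) ^ 2 * X (vC bar j 0) * X (vF bar 0) + X (vC bar j 0) * X (vS bar 0)}

/-- The set `P_m` for `m = i+1`, `i : Fin n` (barred copy if `bar = true`).
Here `i.succ` plays the role of `m` and `i.castSucc` the role of `m-1`; the indices
`1,2,3,4` of the paper are encoded as `0,1,2,3 : Fin 4`. -/
def Pm (n : ℕ) (bar : Bool) (i : Fin n) : Set (MPoly n) :=
  ({ X (vQ bar 0 i.succ) * X (vC bar 0 i.castSucc) * X (vS bar i.castSucc) + X (vS bar i.succ),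
    X (vQ bar 1 i.succ) * X (vC bar 1 i.castSucc) * X (vS bar i.castSucc)
      + X (vQ bar 0 i.succ) * X (vB bar 0 i.castSucc) * X (vC bar 0 i.castSucc)
        * X (vF bar i.castSucc),
    X (vQ bar 2 i.succ) * X (vC bar 2 i.castSucc) * X (vF bar i.castSucc)
      + X (vQ bar 1 i.succ) * X (vC bar 1 i.castSucc) * X (vF bar i.castSucc),
    X (vQ bar 2 i.succ) * X (vB bar 0 i.castSucc) * X (vC bar 2 i.castSucc)
        * X (vS bar i.castSucc)
      + X (vQ bar 1 i.succ) * X (vB bar 3 i.castSucc) * X (vC bar 1 i.castSucc)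
        * X (vS bar i.castSucc),
    X (vQ bar 3 i.succ) * X (vB bar 3 i.castSucc) * X (vC bar 3 i.castSucc)
        * X (vF bar i.castSucc)
      + X (vQ bar 2 i.succ) * X (vC bar 2 i.castSucc) * X (vS bar i.castSucc),
    X (vQ bar 3 i.succ) * X (vC bar 3 i.castSucc) * X (vS bar i.castSucc)
      + X (vF bar i.succ) } : Set (MPoly n))
  ∪ {p | ∃ j : Fin 4, p =
      X (vQ bar 1 i.succ) * X (vB bar 2 i.castSucc) * X (vB bar j i.succ) * X (vC bar j i.succ)
          * X (vF bar i.castSucc)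
        + X (vQ bar 1 i.succ) * X (vB bar 1 i.castSucc) * X (vC bar j i.succ)
          * X (vF bar i.castSucc)}

/-- The set `P = P_0 ∪ P_1 ∪ ⋯ ∪ P_n`; for `bar = true` this is the barred copy `P̄`
(the image of `P` under the substitution replacing each variable by its barred version). -/
def PP (n : ℕ) (bar : Bool) : Set (MPoly n) := P0 n bar ∪ ⋃ i : Fin n, Pm n bar i

/-- The set `G` of seven extra binomials. -/
def GG (n : ℕ) : Set (MPoly n) :=
  { X (vB false 3 (Fin.last n)) * X vl * X vb + X vl * X vc,
    X (vB false 3 (Fin.last n)) * X vl * X vbb + X vl * X vcb,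
    X (vC false 3 (Fin.last n)) * X (vF false (Fin.last n)) + X vl,
    X (vC true 3 (Fin.last n)) * X (vF true (Fin.last n))
      + X (vC false 3 (Fin.last n)) * X (vS false (Fin.last n)),
    X (vB true 3 (Fin.last n)) * X (vC false 3 (Fin.last n)) * X (vS false (Fin.last n))
      + X (vC false 3 (Fin.last n)) * X (vS false (Fin.last n)) * X vb,
    X (vB true 3 (Fin.last n)) * X (vC false 3 (Fin.last n)) * X (vS false (Fin.last n))
      + X (vC false 3 (Fin.last n)) * X (vS false (Fin.last n)) * X vbb,
    X (vC true 3 (Fin.last n)) * X (vS true (Fin.last n)) + X vs }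

/-- The set `𝓕 = P ∪ P̄ ∪ G`. -/
def FF (n : ℕ) : Set (MPoly n) := PP n false ∪ PP n true ∪ GG n

/-- The set `C = {ℓ c̄^{m1} c^{m2} : m1 + m2 = e(n)}` of monomials. -/
def Cmon (n : ℕ) : Set (Mon (MVar n)) :=
  {α | ∃ m1 m2 : ℕ, m1 + m2 = en n ∧
    α = Finsupp.single vl 1 + Finsupp.single vcb m1 + Finsupp.single vc m2}

/-- The set `D = {ℓ^j c̄^{m1} c^{m2} : j ∈ {0,1}, j + m1 + m2 ≤ e(n)}` of monomials. -/
def Dmon (n : ℕ) : Set (Mon (MVar n)) :=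
  {α | ∃ j m1 m2 : ℕ, j ≤ 1 ∧ j + m1 + m2 ≤ en n ∧
    α = Finsupp.single vl j + Finsupp.single vcb m1 + Finsupp.single vc m2}

/-- An injective rank function on the variables realizing the variable ordering
(from least to greatest): `s, c, c̄, ℓ, b, b̄`; then `s_0,…,s_n`; `f_0,…,f_n`;
`c_{10},…,c_{1n}; …; c_{40},…,c_{4n}`; `b_{10},…,b_{4n}`; `q_{10},…,q_{4n}`;
then the barred variables in the same pattern. -/
def vrank (n : ℕ) : MVar n → ℕ
  | .vs => 0
  | .vc => 1
  | .vcb => 2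
  | .vl => 3
  | .vb => 4
  | .vbb => 5
  | .vS bar i => 6 + (cond bar (14 * (n+1)) 0) + (i : ℕ)
  | .vF bar i => 6 + (cond bar (14 * (n+1)) 0) + (n+1) + (i : ℕ)
  | .vC bar j i => 6 + (cond bar (14 * (n+1)) 0) + 2*(n+1) + (j : ℕ)*(n+1) + (i : ℕ)
  | .vB bar j i => 6 + (cond bar (14 * (n+1)) 0) + 6*(n+1) + (j : ℕ)*(n+1) + (i : ℕ)
  | .vQ bar j i => 6 + (cond bar (14 * (n+1)) 0) + 10*(n+1) + (j : ℕ)*(n+1) + (i : ℕ)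

/-- The lexicographic monomial order on `X`: `t ≼_lex u` iff `t = u` or the exponents differ
somewhere and at the greatest variable (w.r.t. `vrank`) where they differ, the exponent of
`t` is smaller. -/
def lexLe (n : ℕ) (t u : Mon (MVar n)) : Prop :=
  t = u ∨ ∃ x : MVar n, t x < u x ∧ ∀ y : MVar n, vrank n x < vrank n y → t y = u y

/-- The total degree of a monomial. -/
def mdeg {σ : Type*} (t : Mon σ) : ℕ := t.sum fun _ k => k

/-- The degree lexicographic monomial order. -/
def degLexLe (n : ℕ) (t u : Mon (MVar n)) : Prop :=
  mdeg t < mdeg u ∨ (mdeg t = mdeg u ∧ lexLe n t u)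

/-- Weighted degree of a monomial with respect to a weight map `w`. -/
noncomputable def wdeg {n : ℕ} (w : MVar n → ℝ) (t : Mon (MVar n)) : ℝ :=
  t.sum fun x k => (k : ℝ) * w x

/-- The weighted monomial order determined by the weight map `w`. -/
def wLe {n : ℕ} (w : MVar n → ℝ) (t u : Mon (MVar n)) : Prop := t = u ∨ wdeg w t < wdeg w u

/-!
Read the binomials of `P` as reversible rewriting rules of a counter machine: `s_m` starts a
subroutine of level `m`, which ends in `f_m` and multiplies by `b_{jm}^{e(m)}`, where the marker
`c_{jm}` selects `j`. Level `m + 1` implements this by two nested loops, each of which uses level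
`m` to count to `e(m)`, so that `e(m + 1) = e(m)²`.

The configurations that occur in this computation, for fixed `j` and final exponent `K`, form an
explicit set that no rule enters or leaves, and hence a union of classes modulo `⟨P⟩`. For
`K = e(n)` it contains `c_{jn} s_n`, and its only element divisible by `f_n` is
`b_{jn}^{e(n)} c_{jn} f_n`.
-/

/-- The syntactic congruence of a subset `S` of a commutative monoid: two elements are related if
membership in `S` does not distinguish them in any context. -/
def syntacticAddCon {M : Type*} [AddCommMonoid M] (S : Set M) : AddCon M where
  r u v := ∀ w, w + u ∈ S ↔ w + v ∈ S
  iseqv := ⟨fun _ _ ↦ .rfl, fun h w ↦ (h w).symm, fun h h' w ↦ (h w).trans (h' w)⟩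
  add' {u v u' v'} h h' w := by
    rw [← add_assoc, h', add_right_comm, h, add_right_comm, add_assoc]

theorem mem_iff_of_syntacticAddCon {M : Type*} [AddCommMonoid M] {S : Set M} {u v : M}
    (h : syntacticAddCon S u v) : u ∈ S ↔ v ∈ S := by
  simpa only [zero_add] using h 0

-- The ring homomorphism `R[σ →₀ ℕ] → R[(σ →₀ ℕ) / r]` kills `P`.
theorem rel_of_monomial_sub_mem_span {σ R : Type*} [CommRing R] [Nontrivial R]
    (r : AddCon (σ →₀ ℕ)) {P : Set (MvPolynomial σ R)}
    (hP : ∀ p ∈ P, ∃ u v, r u v ∧ p = monomial u 1 - monomial v 1) {u v : σ →₀ ℕ}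
    (h : monomial u 1 - monomial v 1 ∈ Ideal.span P) : r u v := by
  let φ : MvPolynomial σ R →+* AddMonoidAlgebra R r.Quotient :=
    AddMonoidAlgebra.mapDomainRingHom R r.mk'
  have φ_monomial (t : σ →₀ ℕ) : φ (monomial t 1) = .single (t : r.Quotient) 1 :=
    AddMonoidAlgebra.mapDomain_single
  have hφP : Ideal.span P ≤ RingHom.ker φ := by
    refine Ideal.span_le.2 fun p hp ↦ ?_
    obtain ⟨a, b, hab, rfl⟩ := hP p hp
    rw [SetLike.mem_coe, RingHom.mem_ker, map_sub, φ_monomial, φ_monomial, (AddCon.eq r).2 hab,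
      sub_self]
  have hφ : φ (monomial u 1) = φ (monomial v 1) := by
    rw [← sub_eq_zero, ← map_sub]
    exact hφP h
  rw [φ_monomial, φ_monomial, AddMonoidAlgebra.single_left_inj one_ne_zero] at hφ
  exact (AddCon.eq r).1 hφ

namespace MayrMeyer

variable {n : ℕ}

/-- The variable `x`, as an exponent vector. -/
noncomputable abbrev var {σ : Type*} (x : σ) : Mon σ := Finsupp.single x 1

theorem add_smul_var_eq_smul_var_iff {σ : Type*} {w : Mon σ} {x : σ} {a b : ℕ} :
    w + a • var x = b • var x ↔ ∃ d, b = d + a ∧ w = d • var x := by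
  constructor
  · intro h
    have hx : w x + a = b := by simpa using DFunLike.congr_fun h x
    exact ⟨w x, hx.symm, by rwa [← hx, add_smul, add_left_inj] at h⟩
  · rintro ⟨d, rfl, rfl⟩
    rw [add_smul]

/-- The level `i` of the variables `s_i, f_i, q_{ji}, c_{ji}, b_{ji}`; the special variables, which
no rule mentions, get level `0`. -/
def level : MVar n → Fin (n + 1)
  | vS _ i | vF _ i | vQ _ _ i | vC _ _ i | vB _ _ i => i
  | _ => 0

variable (bar : Bool)

/-- The monomial `b_{1m}^{N 0} b_{2m}^{N 1} b_{3m}^{N 2} b_{4m}^{N 3}`, i.e. the contents of the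
four counters of level `m`. -/
noncomputable def counters (m : Fin (n + 1)) (N : Fin 4 → ℕ) : Mon (MVar n) :=
  ∑ l, N l • var (vB bar l m)

/-- The binomials of `P`, read as rewriting rules between monomials; the index is the level. -/
inductive Rule : Fin (n + 1) → Mon (MVar n) → Mon (MVar n) → Prop
  | square (j : Fin 4) : Rule 0
      (2 • var (vB bar j 0) + var (vC bar j 0) + var (vF bar 0))
      (var (vC bar j 0) + var (vS bar 0))
  | start (i : Fin n) : Rule i.succ
      (var (vQ bar 0 i.succ) + var (vC bar 0 i.castSucc) + var (vS bar i.castSucc))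
      (var (vS bar i.succ))
  | enterInner (i : Fin n) : Rule i.succ
      (var (vQ bar 1 i.succ) + var (vC bar 1 i.castSucc) + var (vS bar i.castSucc))
      (var (vQ bar 0 i.succ) + var (vB bar 0 i.castSucc) + var (vC bar 0 i.castSucc)
        + var (vF bar i.castSucc))
  | switch (i : Fin n) : Rule i.succ
      (var (vQ bar 2 i.succ) + var (vC bar 2 i.castSucc) + var (vF bar i.castSucc))
      (var (vQ bar 1 i.succ) + var (vC bar 1 i.castSucc) + var (vF bar i.castSucc))
  | repeatInner (i : Fin n) : Rule i.succ
      (var (vQ bar 2 i.succ) + var (vB bar 0 i.castSucc) + var (vC bar 2 i.castSucc)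
        + var (vS bar i.castSucc))
      (var (vQ bar 1 i.succ) + var (vB bar 3 i.castSucc) + var (vC bar 1 i.castSucc)
        + var (vS bar i.castSucc))
  | exitInner (i : Fin n) : Rule i.succ
      (var (vQ bar 3 i.succ) + var (vB bar 3 i.castSucc) + var (vC bar 3 i.castSucc)
        + var (vF bar i.castSucc))
      (var (vQ bar 2 i.succ) + var (vC bar 2 i.castSucc) + var (vS bar i.castSucc))
  | finish (i : Fin n) : Rule i.succ
      (var (vQ bar 3 i.succ) + var (vC bar 3 i.castSucc) + var (vS bar i.castSucc))
      (var (vF bar i.succ))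
  | count (i : Fin n) (j : Fin 4) : Rule i.succ
      (var (vQ bar 1 i.succ) + var (vB bar 2 i.castSucc) + var (vB bar j i.succ)
        + var (vC bar j i.succ) + var (vF bar i.castSucc))
      (var (vQ bar 1 i.succ) + var (vB bar 1 i.castSucc) + var (vC bar j i.succ)
        + var (vF bar i.castSucc))

/-- The loop invariant of the four phases `q_1, …, q_4` in which level `m + 1` squares `e = e(m)`:
the outer loop moves `e` units from `N 0` to `N 3`, each round of the inner loop moves `e` units
from `N 1` to `N 2`, and each step of the inner loop makes one copy of `b_{j,m+1}`. So far there are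
`B` copies, out of the final number `K`. Rules are used in both directions, so phases `q_1` and
`q_4` admit every splitting `N 0 + N 3 = e` that an inner loop can be entered or left with. -/
def LoopInvariant (e K B : ℕ) (N : Fin 4 → ℕ) (k : Fin 4) : Prop :=
  K = B + e * N 0 + N 1 ∧
    match k with
    | 0 => N 0 + N 3 = e ∧ N 1 = 0 ∧ N 2 = 0 ∧ N 0 ≠ 0
    | 1 | 2 => N 0 + N 3 + 1 = e ∧ N 1 + N 2 = e
    | 3 => N 0 + N 3 = e ∧ N 1 = 0 ∧ N 2 = 0 ∧ N 3 ≠ 0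

/-- The memory of a configuration of level `i + 1` working on counter `j`: the marker `c_j` of that
counter, the `B` copies of `b_j` made so far, and the contents `N` of the counters of level `i`. -/
noncomputable def memory (i : Fin n) (j : Fin 4) (B : ℕ) (N : Fin 4 → ℕ) : Mon (MVar n) :=
  var (vC bar j i.succ) + B • var (vB bar j i.succ) + counters bar i.castSucc N

/-- The part of a configuration of level `i + 1` that stays untouched during a recursive call made
in phase `k`: counter `k` of level `i` is handed over to that call. -/
noncomputable def frame (i : Fin n) (j k : Fin 4) (B : ℕ) (N : Fin 4 → ℕ) : Mon (MVar n) :=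
  memory bar i j B (Function.update N k 0) + var (vQ bar k i.succ)

/-- The configurations of level `m` on counter `j` with final value `K`: an explicit description of
the monomials that the rules of level at most `m` connect to `c_{jm} f_m b_{jm}^K`. -/
inductive Config : Fin (n + 1) → Fin 4 → ℕ → Mon (MVar n) → Prop
  | final (m j K) : Config m j K (var (vC bar j m) + var (vF bar m) + K • var (vB bar j m))
  | initial (m j B) :
      Config m j (B + en m) (var (vC bar j m) + var (vS bar m) + B • var (vB bar j m))
  | call (i : Fin n) (j K k B N x) (hN : LoopInvariant (en i) K B N k)
      (hx : Config i.castSucc k (N k) x) : Config i.succ j K (frame bar i j k B N + x)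

variable {bar}

section Counters

variable {m : Fin (n + 1)}

theorem counters_add (N N' : Fin 4 → ℕ) :
    counters bar m (N + N') = counters bar m N + counters bar m N' := by
  simp only [counters, Pi.add_apply, add_smul, Finset.sum_add_distrib]

theorem counters_single (l : Fin 4) (a : ℕ) :
    counters bar m (Pi.single l a) = a • var (vB bar l m) := by
  simp [counters, Pi.single_apply, ite_smul]

theorem counters_update_zero_add (N : Fin 4 → ℕ) (k : Fin 4) :
    counters bar m (Function.update N k 0) + N k • var (vB bar k m) = counters bar m N := by
  rw [← counters_single, ← counters_add]
  congr 1
  ext l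
  by_cases h : l = k <;> simp [h]

theorem counters_apply_vB (N : Fin 4 → ℕ) (l : Fin 4) : counters bar m N (vB bar l m) = N l := by
  simp [counters, Finsupp.finsetSum_apply, Finsupp.single_apply]

theorem exists_of_counters_apply_ne_zero {N : Fin 4 → ℕ} {y : MVar n}
    (hy : counters bar m N y ≠ 0) : ∃ l, y = vB bar l m := by
  by_contra! h
  exact hy (by simp [counters, Finsupp.finsetSum_apply, Ne.symm (h _)])

end Counters

section Level

variable {m : Fin (n + 1)} {i : Fin n} {j k : Fin 4} {B K : ℕ} {N : Fin 4 → ℕ} {t : Mon (MVar n)}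

theorem frame_apply_ne_zero {y : MVar n} (hy : frame bar i j k B N y ≠ 0) :
    level y = i.succ ∨ ∃ l ≠ k, y = vB bar l i.castSucc := by
  by_contra! h
  have hC : vC bar j i.succ ≠ y := by rintro rfl; exact h.1 rfl
  have hQ : vQ bar k i.succ ≠ y := by rintro rfl; exact h.1 rfl
  have hB : vB bar j i.succ ≠ y := by rintro rfl; exact h.1 rfl
  have hcounters : counters bar i.castSucc (Function.update N k 0) y ≠ 0 := by
    simpa [frame, memory, hC, hQ, hB] using hy
  obtain ⟨l, rfl⟩ := exists_of_counters_apply_ne_zero hcounters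
  rw [counters_apply_vB] at hcounters
  exact h.2 l (fun hl ↦ hcounters (by rw [hl, Function.update_self])) rfl

theorem Config.level_le (h : Config bar m j K t) {y : MVar n} (hy : t y ≠ 0) : level y ≤ m := by
  contrapose! hy
  induction h with
  | final m j _ | initial m j _ =>
    have hC : vC bar j m ≠ y := by rintro rfl; exact hy.false
    have hS : vS bar m ≠ y := by rintro rfl; exact hy.false
    have hF : vF bar m ≠ y := by rintro rfl; exact hy.false
    have hB : vB bar j m ≠ y := by rintro rfl; exact hy.false
    simp [hC, hS, hF, hB]
  | call i j _ k B N x _ _ ih =>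
    have hx : x y = 0 := ih (i.castSucc_lt_succ.trans hy)
    have hframe : frame bar i j k B N y = 0 := by
      by_contra h
      rcases frame_apply_ne_zero h with h | ⟨l, -, rfl⟩
      · exact hy.ne h.symm
      · exact hy.not_ge i.castSucc_lt_succ.le
    rw [Finsupp.add_apply, hframe, hx]

theorem Config.apply_of_level_eq_succ {x : Mon (MVar n)} (h : Config bar i.castSucc k K x)
    {y : MVar n} (hy : level y = i.succ) : x y = 0 := by
  by_contra hx
  exact (h.level_le hx).not_gt (hy ▸ i.castSucc_lt_succ)

end Level

section Inversion

variable {m : Fin (n + 1)} {i : Fin n} {j k : Fin 4} {K : ℕ} {t w : Mon (MVar n)}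

theorem Config.eq_of_vC (h : Config bar m j K t) {l : Fin 4} (hl : t (vC bar l m) ≠ 0) : l = j := by
  contrapose! hl
  cases h with
  | final | initial => simp [hl.symm]
  | call i _ _ k B N x _ hx =>
    simp [frame, memory, hl.symm, counters, hx.apply_of_level_eq_succ (y := vC bar l i.succ) rfl]

theorem Config.eq_of_vS (h : Config bar m j K t) (hS : t (vS bar m) ≠ 0) :
    ∃ B, K = B + en m ∧ t = var (vC bar j m) + var (vS bar m) + B • var (vB bar j m) := by
  cases h with
  | final => simp at hS
  | initial => exact ⟨_, rfl, rfl⟩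
  | call i _ _ k B N x _ hx =>
    simp [frame, memory, counters, hx.apply_of_level_eq_succ (y := vS bar i.succ) rfl] at hS

theorem Config.eq_of_vF (h : Config bar m j K t) (hF : t (vF bar m) ≠ 0) :
    t = var (vC bar j m) + var (vF bar m) + K • var (vB bar j m) := by
  cases h with
  | final => rfl
  | initial => simp at hF
  | call i _ _ k B N x _ hx =>
    simp [frame, memory, counters, hx.apply_of_level_eq_succ (y := vF bar i.succ) rfl] at hF

theorem Config.eq_of_vQ (h : Config bar i.succ j K t) (hQ : t (vQ bar k i.succ) ≠ 0) :
    ∃ B N x, LoopInvariant (en i) K B N k ∧ Config bar i.castSucc k (N k) x ∧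
      t = frame bar i j k B N + x := by
  generalize hm : i.succ = m at h
  cases h with
  | final | initial => simp at hQ
  | call i' _ _ k' B N x hN hx =>
    obtain rfl := Fin.succ_injective _ hm
    obtain rfl : k' = k := by
      by_contra hk
      simp [frame, memory, hk, counters,
        hx.apply_of_level_eq_succ (y := vQ bar k i.succ) rfl] at hQ
    exact ⟨B, N, x, hN, hx, rfl⟩

theorem config_add_vS_iff :
    Config bar m j K (w + var (vS bar m)) ↔
      ∃ B, K = B + en m ∧ w = var (vC bar j m) + B • var (vB bar j m) := by
  constructor
  · intro h
    obtain ⟨B, hK, hB⟩ := h.eq_of_vS (by simp)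
    exact ⟨B, hK, by rwa [add_right_comm, add_left_inj] at hB⟩
  · rintro ⟨B, rfl, rfl⟩
    rw [add_right_comm]
    exact .initial m j B

theorem config_add_vF_iff :
    Config bar m j K (w + var (vF bar m)) ↔ w = var (vC bar j m) + K • var (vB bar j m) := by
  rw [← add_left_inj (var (vF bar m)), add_right_comm (var _)]
  exact ⟨fun h ↦ h.eq_of_vF (by simp), fun h ↦ h ▸ .final m j K⟩

theorem frame_add_smul_var {B : ℕ} (N : Fin 4 → ℕ) :
    frame bar i j k B N + N k • var (vB bar k i.castSucc) =
      memory bar i j B N + var (vQ bar k i.succ) := by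
  rw [frame, memory, add_right_comm, add_assoc (var _ + _), counters_update_zero_add, ← memory]

theorem frame_add_single {B : ℕ} (N : Fin 4 → ℕ) (a : ℕ) :
    frame bar i j k B (N + Pi.single k a) = frame bar i j k B N := by
  unfold frame
  congr 2
  ext l
  by_cases hl : l = k <;> simp [hl]

theorem config_add_vQ_add_vF_iff :
    Config bar i.succ j K (w + (var (vQ bar k i.succ) + var (vF bar i.castSucc))) ↔
      ∃ B N, LoopInvariant (en i) K B N k ∧
        w = memory bar i j B N + var (vC bar k i.castSucc) := by
  constructor
  · intro h
    obtain ⟨B, N, x, hN, hx, hw⟩ := h.eq_of_vQ (k := k) (by simp)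
    have hxF : w (vF bar i.castSucc) + 1 = x (vF bar i.castSucc) := by
      simpa [frame, memory, counters] using DFunLike.congr_fun hw (vF bar i.castSucc)
    refine ⟨B, N, hN, add_right_cancel (b := var (vQ bar k i.succ) + var (vF bar i.castSucc)) ?_⟩
    rw [hw, hx.eq_of_vF (by omega), add_comm (var _ + var _), ← add_assoc, frame_add_smul_var]
    abel
  · rintro ⟨B, N, hN, rfl⟩
    have hcall := Config.call i j K k B N _ hN (.final (bar := bar) i.castSucc k (N k))
    rw [add_comm (var _ + var _), ← add_assoc, frame_add_smul_var] at hcall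
    convert hcall using 1
    abel

theorem config_add_vQ_add_vS_iff :
    Config bar i.succ j K (w + (var (vQ bar k i.succ) + var (vS bar i.castSucc))) ↔
      ∃ B N, LoopInvariant (en i) K B (N + Pi.single k (en i)) k ∧
        w = memory bar i j B N + var (vC bar k i.castSucc) := by
  constructor
  · intro h
    obtain ⟨B, N, x, hN, hx, hw⟩ := h.eq_of_vQ (k := k) (by simp)
    have hxS : w (vS bar i.castSucc) + 1 = x (vS bar i.castSucc) := by
      simpa [frame, memory, counters] using DFunLike.congr_fun hw (vS bar i.castSucc)
    obtain ⟨r, hr, rfl⟩ := hx.eq_of_vS (by omega)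
    obtain ⟨N, rfl, rfl⟩ : ∃ N' : Fin 4 → ℕ, N' k = r ∧ N = N' + Pi.single k (en i) := by
      refine ⟨Function.update N k r, Function.update_self .., ?_⟩
      ext l
      by_cases hl : l = k
      · subst hl
        simpa using hr
      · simp [hl]
    refine ⟨B, N, hN, add_right_cancel (b := var (vQ bar k i.succ) + var (vS bar i.castSucc)) ?_⟩
    rw [hw, frame_add_single, add_comm (var _ + var _), ← add_assoc, frame_add_smul_var]
    abel
  · rintro ⟨B, N, hN, rfl⟩
    have hcall := Config.call i j K k B (N + Pi.single k (en i))
      (var (vC bar k i.castSucc) + var (vS bar i.castSucc) + N k • var (vB bar k i.castSucc)) hN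
      (by rw [Pi.add_apply, Pi.single_eq_same]; exact .initial ..)
    rw [frame_add_single, add_comm (var _ + var _), ← add_assoc, frame_add_smul_var] at hcall
    convert hcall using 1
    abel

end Inversion

section LoopInvariant

theorem en_ne_zero {m : ℕ} : en m ≠ 0 := by
  simp [en]

theorem en_succ (m : ℕ) : en (m + 1) = en m * en m := by
  rw [en, en, pow_succ, pow_mul, sq]

variable {e K B : ℕ} {N : Fin 4 → ℕ}

theorem loopInvariant_start_iff (he : e ≠ 0) :
    LoopInvariant e K B (N + Pi.single 0 e) 0 ↔ K = B + e * e ∧ N = 0 := by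
  have hN : N = 0 ↔ N 0 = 0 ∧ N 1 = 0 ∧ N 2 = 0 ∧ N 3 = 0 := by
    simp [funext_iff, Fin.forall_fin_succ]
  simp only [LoopInvariant, Pi.add_apply, Pi.single_apply, Fin.reduceEq, ↓reduceIte, mul_add,
    add_zero]
  grind

theorem loopInvariant_enterInner_iff :
    LoopInvariant e K B (N + Pi.single 1 e) 1 ↔ LoopInvariant e K B (N + Pi.single 0 1) 0 := by
  simp only [LoopInvariant, Pi.add_apply, Pi.single_apply, Fin.reduceEq, ↓reduceIte, mul_add,
    mul_one, add_zero]
  omega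

theorem loopInvariant_switch_iff : LoopInvariant e K B N 2 ↔ LoopInvariant e K B N 1 := .rfl

theorem loopInvariant_repeatInner_iff :
    LoopInvariant e K B (N + Pi.single 0 1 + Pi.single 2 e) 2 ↔
      LoopInvariant e K B (N + Pi.single 3 1 + Pi.single 1 e) 1 := by
  simp only [LoopInvariant, Pi.add_apply, Pi.single_apply, Fin.reduceEq, ↓reduceIte, mul_add,
    mul_one, add_zero]
  omega

theorem loopInvariant_exitInner_iff :
    LoopInvariant e K B (N + Pi.single 3 1) 3 ↔ LoopInvariant e K B (N + Pi.single 2 e) 2 := by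
  simp only [LoopInvariant, Pi.add_apply, Pi.single_apply, Fin.reduceEq, ↓reduceIte, add_zero]
  omega

theorem loopInvariant_finish_iff (he : e ≠ 0) :
    LoopInvariant e K B (N + Pi.single 3 e) 3 ↔ K = B ∧ N = 0 := by
  have hN : N = 0 ↔ N 0 = 0 ∧ N 1 = 0 ∧ N 2 = 0 ∧ N 3 = 0 := by
    simp [funext_iff, Fin.forall_fin_succ]
  simp only [LoopInvariant, Pi.add_apply, Pi.single_apply, Fin.reduceEq, ↓reduceIte, add_zero]
  grind

theorem loopInvariant_count_iff :
    LoopInvariant e K (B + 1) (N + Pi.single 2 1) 1 ↔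
      LoopInvariant e K B (N + Pi.single 1 1) 1 := by
  simp only [LoopInvariant, Pi.add_apply, Pi.single_apply, Fin.reduceEq, ↓reduceIte, add_zero]
  omega

end LoopInvariant

section Rules

variable {m : Fin (n + 1)} {i : Fin n} {j k l : Fin 4} {K : ℕ} {u v w : Mon (MVar n)}

theorem memory_succ_left {B : ℕ} {N : Fin 4 → ℕ} :
    memory bar i j (B + 1) N = memory bar i j B N + var (vB bar j i.succ) := by
  rw [memory, memory, succ_nsmul, ← add_assoc, add_right_comm]

theorem memory_add_single {B : ℕ} {N : Fin 4 → ℕ} :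
    memory bar i j B (N + Pi.single l 1) = memory bar i j B N + var (vB bar l i.castSucc) := by
  rw [memory, counters_add, counters_single, one_smul, ← add_assoc, memory]

theorem add_vB_succ_eq_iff {B : ℕ} {N : Fin 4 → ℕ} :
    w + var (vB bar j i.succ) = memory bar i j B N + var (vC bar k i.castSucc) ↔
      ∃ B', B = B' + 1 ∧ w = memory bar i j B' N + var (vC bar k i.castSucc) := by
  constructor
  · intro h
    have hB : w (vB bar j i.succ) + 1 = B := by
      simpa [memory, counters, i.castSucc_lt_succ.ne] using DFunLike.congr_fun h (vB bar j i.succ)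
    subst hB
    exact ⟨_, rfl, by rwa [memory_succ_left, add_right_comm, add_left_inj] at h⟩
  · rintro ⟨B', rfl, rfl⟩
    rw [memory_succ_left, add_right_comm]

theorem add_vB_castSucc_eq_iff {B : ℕ} {N : Fin 4 → ℕ} :
    w + var (vB bar l i.castSucc) = memory bar i j B N + var (vC bar k i.castSucc) ↔
      ∃ N' : Fin 4 → ℕ, N = N' + Pi.single l 1 ∧
        w = memory bar i j B N' + var (vC bar k i.castSucc) := by
  constructor
  · intro h
    have hl : w (vB bar l i.castSucc) + 1 = N l := by
      simpa [memory, counters_apply_vB, i.castSucc_lt_succ.ne'] using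
        DFunLike.congr_fun h (vB bar l i.castSucc)
    obtain ⟨N', rfl⟩ : ∃ N' : Fin 4 → ℕ, N = N' + Pi.single l 1 := by
      refine ⟨Function.update N l (w (vB bar l i.castSucc)), ?_⟩
      ext l'
      by_cases hl' : l' = l
      · simp [hl', hl]
      · simp [hl']
    exact ⟨N', rfl, by rwa [memory_add_single, add_right_comm, add_left_inj] at h⟩
  · rintro ⟨N', rfl, rfl⟩
    rw [memory_add_single, add_right_comm]

theorem config_add_vQ_add_vB_add_vF_iff :
    Config bar i.succ j K
        (w + (var (vQ bar k i.succ) + var (vB bar l i.castSucc) + var (vF bar i.castSucc))) ↔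
      ∃ B N, LoopInvariant (en i) K B (N + Pi.single l 1) k ∧
        w = memory bar i j B N + var (vC bar k i.castSucc) := by
  rw [add_comm (var _), add_assoc (var _), ← add_assoc w, config_add_vQ_add_vF_iff]
  simp only [add_vB_castSucc_eq_iff]
  grind

theorem config_add_vQ_add_vB_add_vS_iff :
    Config bar i.succ j K
        (w + (var (vQ bar k i.succ) + var (vB bar l i.castSucc) + var (vS bar i.castSucc))) ↔
      ∃ B N, LoopInvariant (en i) K B (N + Pi.single l 1 + Pi.single k (en i)) k ∧
        w = memory bar i j B N + var (vC bar k i.castSucc) := by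
  rw [add_comm (var _), add_assoc (var _), ← add_assoc w, config_add_vQ_add_vS_iff]
  simp only [add_vB_castSucc_eq_iff]
  grind

theorem config_add_vQ_add_vC_add_vF_iff :
    Config bar i.succ j K
        (w + (var (vQ bar k i.succ) + var (vC bar k i.castSucc) + var (vF bar i.castSucc))) ↔
      ∃ B N, LoopInvariant (en i) K B N k ∧ w = memory bar i j B N := by
  rw [add_comm (var _), add_assoc (var _), ← add_assoc w, config_add_vQ_add_vF_iff]
  simp only [add_left_inj]

theorem config_add_vQ_add_vC_add_vS_iff :
    Config bar i.succ j K
        (w + (var (vQ bar k i.succ) + var (vC bar k i.castSucc) + var (vS bar i.castSucc))) ↔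
      ∃ B N, LoopInvariant (en i) K B (N + Pi.single k (en i)) k ∧ w = memory bar i j B N := by
  rw [add_comm (var _), add_assoc (var _), ← add_assoc w, config_add_vQ_add_vS_iff]
  simp only [add_left_inj]

theorem config_add_vQ_add_vB_add_vC_add_vF_iff :
    Config bar i.succ j K (w + (var (vQ bar k i.succ) + var (vB bar l i.castSucc)
        + var (vC bar k i.castSucc) + var (vF bar i.castSucc))) ↔
      ∃ B N, LoopInvariant (en i) K B (N + Pi.single l 1) k ∧ w = memory bar i j B N := by
  rw [add_comm (var _ + var _), add_assoc (var _), ← add_assoc w,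
    config_add_vQ_add_vB_add_vF_iff]
  simp only [add_left_inj]

theorem config_add_vQ_add_vB_add_vC_add_vS_iff :
    Config bar i.succ j K (w + (var (vQ bar k i.succ) + var (vB bar l i.castSucc)
        + var (vC bar k i.castSucc) + var (vS bar i.castSucc))) ↔
      ∃ B N, LoopInvariant (en i) K B (N + Pi.single l 1 + Pi.single k (en i)) k ∧
        w = memory bar i j B N := by
  rw [add_comm (var _ + var _), add_assoc (var _), ← add_assoc w,
    config_add_vQ_add_vB_add_vS_iff]
  simp only [add_left_inj]

theorem config_square_iff :
    Config bar 0 j K (w + (2 • var (vB bar l 0) + var (vC bar l 0) + var (vF bar 0))) ↔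
      Config bar 0 j K (w + (var (vC bar l 0) + var (vS bar 0))) := by
  by_cases hl : l = j
  · subst hl
    rw [← add_assoc, ← add_assoc, ← add_assoc, config_add_vF_iff, config_add_vS_iff,
      add_comm (var _), add_left_inj, add_smul_var_eq_smul_var_iff]
    simp only [add_comm (var (vC bar l 0)), add_left_inj]
    rfl
  · exact iff_of_false (fun h ↦ hl (h.eq_of_vC (by simp))) fun h ↦ hl (h.eq_of_vC (by simp))

theorem memory_zero_right {B : ℕ} :
    memory bar i j B 0 = var (vC bar j i.succ) + B • var (vB bar j i.succ) := by
  simp [memory, counters]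

theorem config_start_iff :
    Config bar i.succ j K (w + (var (vQ bar 0 i.succ) + var (vC bar 0 i.castSucc)
        + var (vS bar i.castSucc))) ↔
      Config bar i.succ j K (w + var (vS bar i.succ)) := by
  simp [config_add_vQ_add_vC_add_vS_iff, config_add_vS_iff, loopInvariant_start_iff en_ne_zero,
    en_succ, and_assoc, memory_zero_right]

theorem config_enterInner_iff :
    Config bar i.succ j K (w + (var (vQ bar 1 i.succ) + var (vC bar 1 i.castSucc)
        + var (vS bar i.castSucc))) ↔
      Config bar i.succ j K (w + (var (vQ bar 0 i.succ) + var (vB bar 0 i.castSucc)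
        + var (vC bar 0 i.castSucc) + var (vF bar i.castSucc))) := by
  rw [config_add_vQ_add_vC_add_vS_iff, config_add_vQ_add_vB_add_vC_add_vF_iff]
  simp only [loopInvariant_enterInner_iff]

theorem config_switch_iff :
    Config bar i.succ j K (w + (var (vQ bar 2 i.succ) + var (vC bar 2 i.castSucc)
        + var (vF bar i.castSucc))) ↔
      Config bar i.succ j K (w + (var (vQ bar 1 i.succ) + var (vC bar 1 i.castSucc)
        + var (vF bar i.castSucc))) := by
  simp only [config_add_vQ_add_vC_add_vF_iff, loopInvariant_switch_iff]

theorem config_repeatInner_iff :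
    Config bar i.succ j K (w + (var (vQ bar 2 i.succ) + var (vB bar 0 i.castSucc)
        + var (vC bar 2 i.castSucc) + var (vS bar i.castSucc))) ↔
      Config bar i.succ j K (w + (var (vQ bar 1 i.succ) + var (vB bar 3 i.castSucc)
        + var (vC bar 1 i.castSucc) + var (vS bar i.castSucc))) := by
  rw [config_add_vQ_add_vB_add_vC_add_vS_iff, config_add_vQ_add_vB_add_vC_add_vS_iff]
  simp only [loopInvariant_repeatInner_iff]

theorem config_exitInner_iff :
    Config bar i.succ j K (w + (var (vQ bar 3 i.succ) + var (vB bar 3 i.castSucc)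
        + var (vC bar 3 i.castSucc) + var (vF bar i.castSucc))) ↔
      Config bar i.succ j K (w + (var (vQ bar 2 i.succ) + var (vC bar 2 i.castSucc)
        + var (vS bar i.castSucc))) := by
  rw [config_add_vQ_add_vB_add_vC_add_vF_iff, config_add_vQ_add_vC_add_vS_iff]
  simp only [loopInvariant_exitInner_iff]

theorem config_finish_iff :
    Config bar i.succ j K (w + (var (vQ bar 3 i.succ) + var (vC bar 3 i.castSucc)
        + var (vS bar i.castSucc))) ↔
      Config bar i.succ j K (w + var (vF bar i.succ)) := by
  simp [config_add_vQ_add_vC_add_vS_iff, config_add_vF_iff, loopInvariant_finish_iff en_ne_zero,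
    and_assoc, memory_zero_right]

theorem config_count_iff :
    Config bar i.succ j K (w + (var (vQ bar 1 i.succ) + var (vB bar 2 i.castSucc)
        + var (vB bar l i.succ) + var (vC bar l i.succ) + var (vF bar i.castSucc))) ↔
      Config bar i.succ j K (w + (var (vQ bar 1 i.succ) + var (vB bar 1 i.castSucc)
        + var (vC bar l i.succ) + var (vF bar i.castSucc))) := by
  by_cases hl : l = j
  · subst hl
    have hlhs : w + (var (vQ bar 1 i.succ) + var (vB bar 2 i.castSucc) + var (vB bar l i.succ)
          + var (vC bar l i.succ) + var (vF bar i.castSucc)) =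
        w + var (vC bar l i.succ) + var (vB bar l i.succ)
          + (var (vQ bar 1 i.succ) + var (vB bar 2 i.castSucc) + var (vF bar i.castSucc)) := by
      abel
    have hrhs : w + (var (vQ bar 1 i.succ) + var (vB bar 1 i.castSucc) + var (vC bar l i.succ)
          + var (vF bar i.castSucc)) =
        w + var (vC bar l i.succ)
          + (var (vQ bar 1 i.succ) + var (vB bar 1 i.castSucc) + var (vF bar i.castSucc)) := by
      abel
    rw [hlhs, hrhs, config_add_vQ_add_vB_add_vF_iff, config_add_vQ_add_vB_add_vF_iff]
    simp only [add_vB_succ_eq_iff, ← loopInvariant_count_iff]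
    grind
  · exact iff_of_false (fun h ↦ hl (h.eq_of_vC (by simp))) fun h ↦ hl (h.eq_of_vC (by simp))

theorem Rule.syntacticAddCon_config (h : Rule bar m u v) :
    syntacticAddCon {t | Config bar m j K t} u v := by
  intro w
  cases h with
  | square => exact config_square_iff
  | start => exact config_start_iff
  | enterInner => exact config_enterInner_iff
  | switch => exact config_switch_iff
  | repeatInner => exact config_repeatInner_iff
  | exitInner => exact config_exitInner_iff
  | finish => exact config_finish_iff
  | count => exact config_count_iff

end Rules

section Lift

variable {m l : Fin (n + 1)} {i : Fin n} {j : Fin 4} {K : ℕ} {u v w : Mon (MVar n)}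

variable (bar) in
/-- The property of both sides of the rules of level `m` that confines these rules to the active
recursive call of a configuration of higher level: they have level at most `m`, contain one of the
control variables `s_k`, `f_k`, and touch counters of level `m` only together with their marker. -/
structure IsGuarded (m : Fin (n + 1)) (u : Mon (MVar n)) : Prop where
  level_le : ∀ y, u y ≠ 0 → level y ≤ m
  vC_ne_zero : ∀ l, u (vB bar l m) ≠ 0 → u (vC bar l m) ≠ 0
  control : ∃ k ≤ m, u (vS bar k) ≠ 0 ∨ u (vF bar k) ≠ 0

theorem Rule.isGuarded_left (h : Rule bar m u v) : IsGuarded bar m u := by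
  have hlt (i : Fin n) : i.castSucc < i.succ := i.castSucc_lt_succ
  constructor
  · cases h <;> intro y hy <;>
      simp only [Finsupp.add_apply, Finsupp.smul_apply, Finsupp.single_apply] at hy <;>
      grind [level]
  all_goals cases h <;> simp [Finsupp.single_apply, (hlt _).le, (hlt _).ne]

theorem Rule.isGuarded_right (h : Rule bar m u v) : IsGuarded bar m v := by
  have hlt (i : Fin n) : i.castSucc < i.succ := i.castSucc_lt_succ
  constructor
  · cases h <;> intro y hy <;>
      simp only [Finsupp.add_apply, Finsupp.single_apply] at hy <;>
      grind [level]
  all_goals cases h <;> simp [Finsupp.single_apply, (hlt _).le, (hlt _).ne]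

theorem IsGuarded.exists_eq_add {k : Fin 4} {B r : ℕ} {N : Fin 4 → ℕ} {x : Mon (MVar n)}
    (hu : IsGuarded bar l u) (hl : l ≤ i.castSucc) (hx : Config bar i.castSucc k r x)
    (hw : w + u = frame bar i j k B N + x) : ∃ x', x = x' + u ∧ w = frame bar i j k B N + x' := by
  have hux : u ≤ x := by
    intro y
    by_cases huy : u y = 0
    · simp [huy]
    have hframe : frame bar i j k B N y = 0 := by
      by_contra hy
      obtain hy | ⟨l', hl', rfl⟩ := frame_apply_ne_zero hy
      · exact (((hu.level_le y huy).trans hl).trans_lt i.castSucc_lt_succ).ne hy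
      · obtain rfl : l = i.castSucc := hl.antisymm (hu.level_le _ huy)
        have hC := hu.vC_ne_zero l' huy
        have hwC : w (vC bar l' i.castSucc) + u (vC bar l' i.castSucc) =
            x (vC bar l' i.castSucc) := by
          simpa [frame, memory, counters, i.castSucc_lt_succ.ne'] using
            DFunLike.congr_fun hw (vC bar l' i.castSucc)
        exact hl' (hx.eq_of_vC (by omega))
    have hwy : w y + u y = x y := by simpa [hframe] using DFunLike.congr_fun hw y
    omega
  obtain ⟨x', rfl⟩ := exists_add_of_le hux
  exact ⟨x', add_comm .., by rwa [add_comm u, ← add_assoc, add_left_inj] at hw⟩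

theorem IsGuarded.config_succ (hu : IsGuarded bar l u) (hl : l ≤ i.castSucc)
    (huv : ∀ k r w, Config bar i.castSucc k r (w + u) → Config bar i.castSucc k r (w + v))
    (h : Config bar i.succ j K (w + u)) : Config bar i.succ j K (w + v) := by
  obtain ⟨k, hk, hcontrol⟩ := hu.control
  have hk : k ≠ i.succ := ((hk.trans hl).trans_lt i.castSucc_lt_succ).ne
  generalize hm : i.succ = m at h
  generalize ht : w + u = t at h
  cases h with
  | final | initial =>
    have hS : w (vS bar k) + u (vS bar k) = 0 := by
      simpa [← hm, hk.symm] using DFunLike.congr_fun ht (vS bar k)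
    have hF : w (vF bar k) + u (vF bar k) = 0 := by
      simpa [← hm, hk.symm] using DFunLike.congr_fun ht (vF bar k)
    omega
  | call i' _ _ k B N x hN hx =>
    obtain rfl := Fin.succ_injective _ hm
    obtain ⟨x, rfl, rfl⟩ := hu.exists_eq_add hl hx ht
    rw [add_assoc]
    exact .call i j K k B N _ hN (huv _ _ _ hx)

theorem Rule.syntacticAddCon_config_of_le (h : Rule bar l u v) (hl : l ≤ m) (j : Fin 4) (K : ℕ) :
    syntacticAddCon {t | Config bar m j K t} u v := by
  induction m using Fin.induction generalizing j K with
  | zero =>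
    obtain rfl := Fin.le_zero_iff.1 hl
    exact h.syntacticAddCon_config
  | succ i ih =>
    obtain rfl | hl := hl.eq_or_lt
    · exact h.syntacticAddCon_config
    · have hl := Fin.le_castSucc_iff.2 hl
      exact fun w ↦ ⟨h.isGuarded_left.config_succ hl fun k r w ↦ (ih hl k r w).1,
        h.isGuarded_right.config_succ hl fun k r w ↦ (ih hl k r w).2⟩

end Lift

theorem exists_rule_of_mem_PP {bar : Bool} {p : MPoly n} (hp : p ∈ PP n bar) :
    ∃ m u v, Rule bar m u v ∧ p = monomial u 1 + monomial v 1 := by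
  have hX (x : MVar n) : (X x : MPoly n) = monomial (var x) 1 := rfl
  simp only [PP, P0, Pm, hX, monomial_mul, monomial_pow, one_pow, mul_one, Set.mem_union,
    Set.mem_iUnion, Set.mem_ofPred_eq, Set.mem_insert_iff, Set.mem_singleton_iff] at hp
  obtain ⟨j, rfl⟩ | ⟨i, (rfl | rfl | rfl | rfl | rfl | rfl) | ⟨j, rfl⟩⟩ := hp
  · exact ⟨_, _, _, .square j, rfl⟩
  · exact ⟨_, _, _, .start i, rfl⟩
  · exact ⟨_, _, _, .enterInner i, rfl⟩
  · exact ⟨_, _, _, .switch i, rfl⟩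
  · exact ⟨_, _, _, .repeatInner i, rfl⟩
  · exact ⟨_, _, _, .exitInner i, rfl⟩
  · exact ⟨_, _, _, .finish i, rfl⟩
  · exact ⟨_, _, _, .count i j, rfl⟩

theorem config_iff_of_monomial_add_mem_span {bar : Bool} {u v : Mon (MVar n)}
    (h : (monomial u 1 + monomial v 1 : MPoly n) ∈ Ideal.span (PP n bar)) (j : Fin 4) (K : ℕ) :
    Config bar (Fin.last n) j K u ↔ Config bar (Fin.last n) j K v := by
  rw [← CharTwo.sub_eq_add] at h
  refine mem_iff_of_syntacticAddCon (rel_of_monomial_sub_mem_span _ (fun p hp ↦ ?_) h)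
  obtain ⟨m, u, v, huv, rfl⟩ := exists_rule_of_mem_PP hp
  exact ⟨u, v, huv.syntacticAddCon_config_of_le (Fin.le_last m) j K, (CharTwo.sub_eq_add ..).symm⟩

end MayrMeyer

open MayrMeyer in
theorem stmt10_general (n : ℕ) (bar : Bool) (j : Fin 4) (α : Mon (MVar n))
    (h : (X (vC bar j (Fin.last n)) * X (vS bar (Fin.last n)) + monomial α 1 : MPoly n)
      ∈ Ideal.span (PP n bar))
    (hf : α (vF bar (Fin.last n)) ≠ 0) :
    (monomial α 1 : MPoly n)
      = X (vB bar j (Fin.last n)) ^ en n * X (vC bar j (Fin.last n)) * X (vF bar (Fin.last n)) := by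
  have hinitial : Config bar (Fin.last n) j (en n)
      (var (vC bar j (Fin.last n)) + var (vS bar (Fin.last n))) := by
    simpa using Config.initial (bar := bar) (Fin.last n) j 0
  have hα : Config bar (Fin.last n) j (en n) α :=
    (config_iff_of_monomial_add_mem_span (by simpa [X, monomial_mul] using h) j _).1 hinitial
  rw [hα.eq_of_vF hf, add_comm _ (_ • _), ← add_assoc]
  simp [X, monomial_mul, monomial_pow]

open MVar in
/-- For `1 ≤ j ≤ 4` (encoded `j : Fin 4`) and any monomial `α` with
`c_{jn} s_n + α ∈ ⟨P⟩`, if the variable `f_n` divides `α` then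
`α = b_{jn}^{2^(2^n)} c_{jn} f_n`. -/
theorem stmt10 (n : ℕ) (j : Fin 4) (α : Mon (MVar n))
    (h : (X (vC false j (Fin.last n)) * X (vS false (Fin.last n)) + monomial α 1 : MPoly n)
      ∈ Ideal.span (PP n false))
    (hf : α (vF false (Fin.last n)) ≠ 0) :
    (monomial α 1 : MPoly n)
      = X (vB false j (Fin.last n)) ^ en n * X (vC false j (Fin.last n))
          * X (vF false (Fin.last n)) :=
  stmt10_general n false j α h hf
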